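/- arXiv:math/0512053 — 2 statements merged into one kernel-verified Lean document; each statement's English description precedes it below -/
import Mathlib

section
/- Fix m < 1 with m ≠ 0. Then (1/(4K(m))) ∫₀^{4K(m)} sn(t, m)² dt = (K(m) − E(m))/(m K(m)), i.e. the average of sn(·, m)² over its period 4K(m) equals (K(m) − E(m))/(m K(m)). -/
open Real

/-- Incomplete elliptic integral of the first kind `F(φ, m)`. -/
noncomputable def Fm (m φ : ℝ) : ℝ := ∫ θ in (0:ℝ)..φ, 1 / Real.sqrt (1 - m * Real.sin θ ^ 2)

/-- Complete elliptic integral of the first kind `K(m) = F(π/2, m)`. -/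
noncomputable def Kc (m : ℝ) : ℝ := Fm m (π / 2)

/-- Complete elliptic integral of the second kind (parameter `m`). -/
noncomputable def Ec (m : ℝ) : ℝ := ∫ θ in (0:ℝ)..(π / 2), Real.sqrt (1 - m * Real.sin θ ^ 2)

/-- The Jacobi elliptic sine `sn(t, m) = sin(F_m⁻¹(t))`. -/
noncomputable def sn (t m : ℝ) : ℝ := Real.sin (Function.invFun (Fm m) t)

/-!
The substitution `t = F_m(θ)` turns `sn(t, m)` into `sin θ` and `dt` into `dθ / √(1 - m sin² θ)`.
Since `m sin² θ = 1 - (1 - m sin² θ)`, the integral of `m sn²` over `[0, F_m(φ)]` is the difference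
`F(φ, m) - E(φ, m)` of the incomplete elliptic integrals. Both integrands are even and
`π`-periodic, so at `φ = 2π` these integrals are four times the complete ones.
-/

section PeriodicEven

variable {E : Type*} [NormedAddCommGroup E] [NormedSpace ℝ E] {f : ℝ → E}

theorem integral_neg_self_eq_two_smul_of_even {a : ℝ} (heven : Function.Even f)
    (hfi : IntervalIntegrable f MeasureTheory.volume 0 a) :
    ∫ x in (-a)..a, f x = (2 : ℤ) • ∫ x in (0 : ℝ)..a, f x := by
  have hneg : IntervalIntegrable f MeasureTheory.volume (-a) 0 := by
    simpa [heven.eq] using hfi.symm.comp_sub_left 0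
  have hreflect : ∫ x in (-a)..0, f x = ∫ x in (0 : ℝ)..a, f x := by
    simpa [heven.eq] using (intervalIntegral.integral_comp_neg f (a := 0) (b := a)).symm
  rw [← intervalIntegral.integral_add_adjacent_intervals hneg hfi, hreflect, two_zsmul]

theorem integral_zero_zsmul_period_of_even {T : ℝ} (hper : Function.Periodic f T)
    (heven : Function.Even f)
    (hfi : ∀ a b, IntervalIntegrable f MeasureTheory.volume a b) (n : ℤ) :
    ∫ x in (0 : ℝ)..n • T, f x = (n * 2) • ∫ x in (0 : ℝ)..T / 2, f x := by
  calc ∫ x in (0 : ℝ)..n • T, f x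
      = n • ∫ x in (0 : ℝ)..T, f x := by
        simpa only [zero_add] using hper.intervalIntegral_add_zsmul_eq n 0 hfi
    _ = n • ∫ x in (-(T / 2))..T / 2, f x := by
        have hshift := hper.intervalIntegral_add_eq 0 (-(T / 2))
        rw [zero_add, neg_add_eq_sub, sub_half] at hshift
        rw [hshift]
    _ = (n * 2) • ∫ x in (0 : ℝ)..T / 2, f x := by
        rw [integral_neg_self_eq_two_smul_of_even heven (hfi _ _), mul_zsmul]

end PeriodicEven

section EllipticIntegrals

/-- Incomplete elliptic integral of the second kind `E(φ, m)`, so that `Ec m = E(π/2, m)`. -/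
noncomputable def Em (m φ : ℝ) : ℝ := ∫ θ in (0 : ℝ)..φ, √(1 - m * sin θ ^ 2)

variable {m : ℝ}

theorem one_sub_mul_sin_sq_pos (hm : m < 1) (θ : ℝ) : 0 < 1 - m * sin θ ^ 2 := by
  rcases le_total m 0 with h | h
  · nlinarith [sq_nonneg (sin θ)]
  · nlinarith [sin_sq_le_one θ]

theorem continuous_one_div_sqrt_one_sub_mul_sin_sq (hm : m < 1) :
    Continuous fun θ : ℝ => 1 / √(1 - m * sin θ ^ 2) :=
  continuous_const.div (by fun_prop) fun θ => (sqrt_pos.2 (one_sub_mul_sin_sq_pos hm θ)).ne'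

theorem Fm_zero (m : ℝ) : Fm m 0 = 0 := intervalIntegral.integral_same

theorem hasDerivAt_Fm (hm : m < 1) (φ : ℝ) :
    HasDerivAt (Fm m) (1 / √(1 - m * sin φ ^ 2)) φ :=
  ((continuous_one_div_sqrt_one_sub_mul_sin_sq hm).integral_hasStrictDerivAt 0 φ).hasDerivAt

theorem strictMono_Fm (hm : m < 1) : StrictMono (Fm m) :=
  strictMono_of_hasDerivAt_pos (hasDerivAt_Fm hm) fun φ =>
    one_div_pos.2 (sqrt_pos.2 (one_sub_mul_sin_sq_pos hm φ))

theorem Kc_pos (hm : m < 1) : 0 < Kc m :=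
  (Fm_zero m).symm.trans_lt (strictMono_Fm hm pi_div_two_pos)

theorem Fm_int_mul_pi (hm : m < 1) (n : ℤ) : Fm m (n * π) = n * 2 * Kc m := by
  have h := integral_zero_zsmul_period_of_even (T := π)
    (f := fun θ => 1 / √(1 - m * sin θ ^ 2)) (fun θ => by simp [sin_add_pi])
    (fun θ => by simp) (continuous_one_div_sqrt_one_sub_mul_sin_sq hm).intervalIntegrable n
  simpa only [Fm, Kc, zsmul_eq_mul, Int.cast_mul, Int.cast_ofNat] using h

theorem Em_int_mul_pi (m : ℝ) (n : ℤ) : Em m (n * π) = n * 2 * Ec m := by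
  have hcont : Continuous fun θ : ℝ => √(1 - m * sin θ ^ 2) := by fun_prop
  have h := integral_zero_zsmul_period_of_even (T := π)
    (f := fun θ => √(1 - m * sin θ ^ 2)) (fun θ => by simp [sin_add_pi])
    (fun θ => by simp) hcont.intervalIntegrable n
  simpa only [Em, Ec, zsmul_eq_mul, Int.cast_mul, Int.cast_ofNat] using h

theorem mul_integral_sin_sq_div_sqrt (hm : m < 1) (φ : ℝ) :
    m * ∫ θ in (0 : ℝ)..φ, 1 / √(1 - m * sin θ ^ 2) * sin θ ^ 2 = Fm m φ - Em m φ := by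
  have hcont : Continuous fun θ : ℝ => √(1 - m * sin θ ^ 2) := by fun_prop
  rw [Fm, Em, ← intervalIntegral.integral_const_mul, ← intervalIntegral.integral_sub
    ((continuous_one_div_sqrt_one_sub_mul_sin_sq hm).intervalIntegrable _ _)
    (hcont.intervalIntegrable _ _)]
  refine intervalIntegral.integral_congr fun θ _ => ?_
  have hpos := one_sub_mul_sin_sq_pos hm θ
  have hne : √(1 - m * sin θ ^ 2) ≠ 0 := (sqrt_pos.2 hpos).ne'
  have hsq : √(1 - m * sin θ ^ 2) ^ 2 = 1 - m * sin θ ^ 2 := sq_sqrt hpos.le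
  field_simp
  linarith

end EllipticIntegrals

section JacobiSine

variable {m : ℝ}

theorem sn_Fm (hm : m < 1) (φ : ℝ) : sn (Fm m φ) m = sin φ :=
  congrArg sin (Function.leftInverse_invFun (strictMono_Fm hm).injective φ)

theorem integral_comp_sn {E : Type*} [NormedAddCommGroup E] [NormedSpace ℝ E] (hm : m < 1)
    (g : ℝ → E) (a b : ℝ) :
    ∫ t in (Fm m a)..(Fm m b), g (sn t m) =
      ∫ θ in a..b, (1 / √(1 - m * sin θ ^ 2)) • g (sin θ) := by
  have hcont : Continuous (Fm m) :=
    continuous_iff_continuousAt.2 fun φ => (hasDerivAt_Fm hm φ).continuousAt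
  rw [← intervalIntegral.integral_deriv_smul_comp_of_deriv_nonneg hcont.continuousOn
    (fun θ _ => hasDerivAt_Fm hm θ) fun θ _ => by positivity]
  simp only [Function.comp_apply, sn_Fm hm]

theorem mul_integral_sn_sq (hm : m < 1) (φ : ℝ) :
    m * ∫ t in (0 : ℝ)..(Fm m φ), sn t m ^ 2 = Fm m φ - Em m φ := by
  have h := integral_comp_sn hm (· ^ 2) 0 φ
  rw [Fm_zero] at h
  simpa only [h, smul_eq_mul] using mul_integral_sin_sq_div_sqrt hm φ

end JacobiSine

theorem stmt_9 (m : ℝ) (hm : m < 1) (hm0 : m ≠ 0) :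
    (1 / (4 * Kc m)) * ∫ t in (0:ℝ)..(4 * Kc m), sn t m ^ 2
      = (Kc m - Ec m) / (m * Kc m) := by
  have hK : Kc m ≠ 0 := (Kc_pos hm).ne'
  have hF : Fm m (2 * π) = 4 * Kc m := (Fm_int_mul_pi hm 2).trans (by norm_num)
  have hE : Em m (2 * π) = 4 * Ec m := (Em_int_mul_pi m 2).trans (by norm_num)
  have h := mul_integral_sn_sq hm (2 * π)
  rw [hF, hE] at h
  field_simp
  linarith
end

section
/- Let η : ℝ → ℝ be a continuous, odd, 2π-periodic function, and define v(t, x) := η(t + x) − η(t − x). Then ∫₀^{2π} ∫₀^{π} v(t, x)⁴ dx dt = 2π ∫₀^{2π} η(s)⁴ ds + 3 ( ∫₀^{2π} η(s)² ds )². -/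
open Real

/-! In the coordinates `u = t + x` and `v = t - x` the integrand is `(η u - η v) ^ 4`.
Reflecting `x` leaves it unchanged, so the integral over half a period in `x` is half the integral
over the full torus. The map `(t, x) ↦ (t + x, t - x)` is a double cover of the torus by itself and
preserves the mean, so the full integral is that of `(η u - η v) ^ 4` over independent `u` and `v`.
Its binomial expansion is a sum of products of moments of `η`; the product of the first and third
moments drops out because `η` is odd. -/

section NormedSpace

variable {E : Type*} [NormedAddCommGroup E] [NormedSpace ℝ E]

theorem intervalIntegral_intervalIntegral_swap_of_continuousOn {F : ℝ → ℝ → E} {a b c d : ℝ}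
    (hF : ContinuousOn F.uncurry (Set.uIcc a b ×ˢ Set.uIcc c d)) :
    ∫ x in a..b, ∫ y in c..d, F x y = ∫ y in c..d, ∫ x in a..b, F x y :=
  MeasureTheory.intervalIntegral_intervalIntegral_swap <|
    (hF.integrableOn_compact (isCompact_uIcc.prod isCompact_uIcc)).mono_set
      (Set.prod_mono Set.uIoc_subset_uIcc Set.uIoc_subset_uIcc)

theorem intervalIntegral_eq_zero_of_periodic_of_odd {f : ℝ → E} {T : ℝ}
    (hper : Function.Periodic f T) (hodd : ∀ t, f (-t) = -f t) :
    ∫ s in 0..T, f s = 0 := by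
  have reflect := intervalIntegral.integral_comp_sub_left (a := 0) (b := T) f T
  simp only [sub_self, sub_zero, hper.sub_eq', hodd, intervalIntegral.integral_neg] at reflect
  have : IsAddTorsionFree E := .of_isTorsionFree ℝ E
  exact self_eq_neg.mp reflect.symm

theorem intervalIntegral_eq_two_smul_of_periodic_of_even {f : ℝ → E} {T : ℝ}
    (hf : IntervalIntegrable f MeasureTheory.volume 0 T) (hper : Function.Periodic f (2 * T))
    (heven : ∀ t, f (-t) = f t) :
    ∫ s in 0..2 * T, f s = (2 : ℝ) • ∫ s in 0..T, f s := by
  have reflect (s : ℝ) : f (2 * T - s) = f s := by rw [hper.sub_eq', heven]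
  have midpoint : 2 * T - T = T := by ring
  have hf' : IntervalIntegrable f MeasureTheory.volume T (2 * T) := by
    simpa only [reflect, sub_zero, midpoint] using (hf.comp_sub_left (2 * T)).symm
  have second_half : ∫ s in T..2 * T, f s = ∫ s in 0..T, f s := by
    simpa only [reflect, sub_zero, midpoint] using
      (intervalIntegral.integral_comp_sub_left (a := 0) (b := T) f (2 * T)).symm
  rw [← intervalIntegral.integral_add_adjacent_intervals hf hf', second_half, two_smul]

theorem intervalIntegral_comp_add_right_of_periodic {f : ℝ → E} {T : ℝ}
    (hper : Function.Periodic f T) (a : ℝ) :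
    ∫ t in 0..T, f (t + a) = ∫ t in 0..T, f t := by
  rw [intervalIntegral.integral_comp_add_right, add_comm T, zero_add,
    hper.intervalIntegral_add_eq a 0, zero_add]

theorem intervalIntegral_comp_add_intCast_mul_of_periodic {f : ℝ → E} {T : ℝ}
    (hf : ∀ a b, IntervalIntegrable f MeasureTheory.volume a b) (hper : Function.Periodic f T)
    (a : ℝ) {n : ℤ} (hn : n ≠ 0) :
    ∫ x in 0..T, f (a + n * x) = ∫ s in 0..T, f s := by
  have hn' : (n : ℝ) ≠ 0 := Int.cast_ne_zero.mpr hn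
  have n_periods : ∫ s in a..a + n * T, f s = (n : ℝ) • ∫ s in 0..T, f s := by
    rw [← zsmul_eq_mul, hper.intervalIntegral_add_zsmul_eq n a hf,
      hper.intervalIntegral_add_eq a 0, zero_add, Int.cast_smul_eq_zsmul]
  rw [intervalIntegral.integral_comp_add_mul _ hn', mul_zero, add_zero, n_periods,
    inv_smul_smul₀ hn']

theorem intervalIntegral_intervalIntegral_comp_add_sub_of_periodic {F : ℝ → ℝ → E} {T : ℝ}
    (hF : Continuous F.uncurry) (hper_left : ∀ v, Function.Periodic (F · v) T)
    (hper_right : ∀ u, Function.Periodic (F u) T) :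
    ∫ t in 0..T, ∫ x in 0..T, F (t + x) (t - x) = ∫ u in 0..T, ∫ v in 0..T, F u v := by
  have hF_comp {α : Type} [TopologicalSpace α] {f g : α → ℝ} (hf : Continuous f)
      (hg : Continuous g) : Continuous fun a ↦ F (f a) (g a) := hF.comp (hf.prodMk hg)
  have shift (x : ℝ) : ∫ t in 0..T, F (t + x) (t - x) = ∫ t in 0..T, F (t + 2 * x) t := by
    have hper : Function.Periodic (fun t ↦ F (t + x) (t - x)) T := fun t ↦ by
      simp only [add_right_comm t T x, add_sub_right_comm t T x, hper_left _ (t + x),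
        hper_right _ (t - x)]
    rw [← intervalIntegral_comp_add_right_of_periodic hper x]
    simp only [add_assoc, ← two_mul, add_sub_cancel_right]
  have integral_left (v : ℝ) : ∫ x in 0..T, F (v + 2 * x) v = ∫ u in 0..T, F u v := by
    exact_mod_cast intervalIntegral_comp_add_intCast_mul_of_periodic
      (fun a b ↦ (hF_comp continuous_id continuous_const).intervalIntegrable a b)
      (hper_left v) v two_ne_zero
  calc ∫ t in 0..T, ∫ x in 0..T, F (t + x) (t - x)
      = ∫ x in 0..T, ∫ t in 0..T, F (t + x) (t - x) :=
        intervalIntegral_intervalIntegral_swap_of_continuousOn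
          (hF_comp (by fun_prop) (by fun_prop)).continuousOn
    _ = ∫ x in 0..T, ∫ v in 0..T, F (v + 2 * x) v := by simp_rw [shift]
    _ = ∫ v in 0..T, ∫ x in 0..T, F (v + 2 * x) v :=
        intervalIntegral_intervalIntegral_swap_of_continuousOn
          (hF_comp (by fun_prop) (by fun_prop)).continuousOn
    _ = ∫ v in 0..T, ∫ u in 0..T, F u v := by simp_rw [integral_left]
    _ = ∫ u in 0..T, ∫ v in 0..T, F u v :=
        intervalIntegral_intervalIntegral_swap_of_continuousOn
          (hF_comp (by fun_prop) (by fun_prop)).continuousOn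

end NormedSpace

section RCLike

variable {𝕜 : Type*} [RCLike 𝕜]

theorem intervalIntegral_intervalIntegral_sub_pow {f g : ℝ → 𝕜} {a b c d : ℝ}
    (hf : ContinuousOn f (Set.uIcc a b)) (hg : ContinuousOn g (Set.uIcc c d)) (n : ℕ) :
    ∫ x in a..b, ∫ y in c..d, (f x - g y) ^ n
      = ∑ m ∈ Finset.range (n + 1), (-1) ^ (m + n) * (∫ x in a..b, f x ^ m)
          * (∫ y in c..d, g y ^ (n - m)) * n.choose m := by
  have inner (x : ℝ) : ∫ y in c..d, (f x - g y) ^ n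
      = ∑ m ∈ Finset.range (n + 1),
          (-1) ^ (m + n) * f x ^ m * (∫ y in c..d, g y ^ (n - m)) * n.choose m := by
    simp_rw [sub_pow]
    rw [intervalIntegral.integral_finsetSum fun m _ ↦ ContinuousOn.intervalIntegrable (by fun_prop)]
    simp_rw [intervalIntegral.integral_mul_const, intervalIntegral.integral_const_mul]
  simp_rw [inner]
  rw [intervalIntegral.integral_finsetSum fun m _ ↦ ContinuousOn.intervalIntegrable (by fun_prop)]
  simp_rw [intervalIntegral.integral_mul_const, intervalIntegral.integral_const_mul]

theorem stmt_19_general {η : ℝ → 𝕜} {T : ℝ} (hcont : Continuous η)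
    (hper : Function.Periodic η (2 * T)) :
    ∫ t in 0..2 * T, ∫ x in 0..T, (η (t + x) - η (t - x)) ^ 4
      = 2 * T * (∫ s in 0..2 * T, η s ^ 4)
        - 4 * (∫ s in 0..2 * T, η s) * (∫ s in 0..2 * T, η s ^ 3)
        + 3 * (∫ s in 0..2 * T, η s ^ 2) ^ 2 := by
  have half (t : ℝ) : ∫ x in 0..2 * T, (η (t + x) - η (t - x)) ^ 4
      = 2 * ∫ x in 0..T, (η (t + x) - η (t - x)) ^ 4 := by
    rw [intervalIntegral_eq_two_smul_of_periodic_of_even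
      (Continuous.intervalIntegrable (by fun_prop) _ _), RCLike.real_smul_eq_coe_mul,
      RCLike.ofReal_ofNat]
    · intro x
      simp only [← add_assoc, hper (t + x), ← sub_sub, hper.sub_eq (t - x)]
    · intro x
      simp only [sub_neg_eq_add, ← sub_eq_add_neg]
      ring
  have separate : ∫ t in 0..2 * T, ∫ x in 0..2 * T, (η (t + x) - η (t - x)) ^ 4
      = ∫ u in 0..2 * T, ∫ v in 0..2 * T, (η u - η v) ^ 4 :=
    intervalIntegral_intervalIntegral_comp_add_sub_of_periodic
      (F := fun u v ↦ (η u - η v) ^ 4) (by fun_prop)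
      (fun v u ↦ by simp only [hper u]) (fun u v ↦ by simp only [hper v])
  have expand : ∫ u in 0..2 * T, ∫ v in 0..2 * T, (η u - η v) ^ 4
      = 4 * T * (∫ s in 0..2 * T, η s ^ 4)
        - 8 * (∫ s in 0..2 * T, η s) * (∫ s in 0..2 * T, η s ^ 3)
        + 6 * (∫ s in 0..2 * T, η s ^ 2) ^ 2 := by
    rw [intervalIntegral_intervalIntegral_sub_pow hcont.continuousOn hcont.continuousOn]
    have zeroth_moment : ∫ _ in 0..2 * T, (1 : 𝕜) = 2 * T := by
      simp [RCLike.real_smul_eq_coe_mul, RCLike.ofReal_ofNat]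
    simp only [Finset.sum_range_succ, Finset.sum_range_zero, Nat.choose, Nat.reduceAdd,
      Nat.reduceSub, Nat.cast_ofNat, Nat.cast_one, pow_zero, pow_one, zeroth_moment]
    ring
  simp_rw [half, intervalIntegral.integral_const_mul] at separate
  linear_combination (separate.trans expand) / 2

end RCLike

theorem stmt_19 (η : ℝ → ℝ) (hcont : Continuous η) (hodd : ∀ t : ℝ, η (-t) = -η t)
    (hper : Function.Periodic η (2 * π)) :
    ∫ t in (0:ℝ)..(2 * π), ∫ x in (0:ℝ)..π, (η (t + x) - η (t - x)) ^ 4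
      = 2 * π * (∫ s in (0:ℝ)..(2 * π), η s ^ 4)
        + 3 * (∫ s in (0:ℝ)..(2 * π), η s ^ 2) ^ 2 := by
  simpa [intervalIntegral_eq_zero_of_periodic_of_odd hper hodd] using
    stmt_19_general hcont hper
end
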